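/- arXiv:1902.10177 — 8 statements merged into one kernel-verified Lean document; each statement's English description precedes it below -/
import Mathlib

section
/- The optimal coherence of eight lines satisfies 0.6 ≤ μ₈ ≤ 0.647588979. -/
open scoped RealInnerProductSpace

noncomputable section

/-- Euclidean 3-space. -/
abbrev E3 := EuclideanSpace ℝ (Fin 3)

/-- The coherence of a finite set of vectors: the largest absolute inner product
between distinct elements. -/
def coherence (Φ : Finset E3) : ℝ :=
  sSup {r : ℝ | ∃ x ∈ Φ, ∃ y ∈ Φ, x ≠ y ∧ r = |⟪x, y⟫|}

/-- `muOpt n` is the infimum of the coherence over all sets of `n` unit vectors in ℝ³. -/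
def muOpt (n : ℕ) : ℝ :=
  sInf {r : ℝ | ∃ Φ : Finset E3, Φ.card = n ∧ (∀ x ∈ Φ, ‖x‖ = 1) ∧ r = coherence Φ}

def W8 : Fin 8 → Fin 3 → ℤ :=
  ![![-36105598685, 236278685766, 971014298760], ![120569195909, -572795395882, 810782648713],
    ![359743065845, 796136520779, 486571235133], ![936474356640, 341568286888, 79667338020],
    ![663364644516, -548772363007, -508720200117], ![-235887705144, 968530973190, -79402421463],
    ![654381599367, 266838257887, -707518244668], ![-820352067976, 438764363137, -366753756912]]

def d8 (i j : Fin 8) : ℤ := W8 i 0 * W8 j 0 + W8 i 1 * W8 j 1 + W8 i 2 * W8 j 2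

lemma d8_pos : ∀ i, 0 < d8 i i := by decide

lemma d8_le : ∀ i j, i ≠ j →
    d8 i j * d8 i j * 1000000000000000000 ≤ 647588979 * 647588979 * (d8 i i * d8 j j) := by
  decide

lemma inner3 (x y : E3) : ⟪x, y⟫ = x 0 * y 0 + x 1 * y 1 + x 2 * y 2 := by
  simp [PiLp.inner_apply, Fin.sum_univ_three, mul_comm]

def u8 (i : Fin 8) : E3 :=
  (Real.sqrt (d8 i i))⁻¹ • !₂[(W8 i 0 : ℝ), (W8 i 1 : ℝ), (W8 i 2 : ℝ)]

lemma u8_inner (i j : Fin 8) :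
    ⟪u8 i, u8 j⟫ = (d8 i j : ℝ) / (Real.sqrt (d8 i i) * Real.sqrt (d8 j j)) := by
  rw [inner3]
  simp only [u8, d8, PiLp.smul_apply, smul_eq_mul]
  simp
  ring

lemma u8_self (i : Fin 8) : ⟪u8 i, u8 i⟫ = 1 := by
  have h : (0 : ℝ) < d8 i i := by exact_mod_cast d8_pos i
  rw [u8_inner, Real.mul_self_sqrt h.le, div_self h.ne']

lemma u8_norm (i : Fin 8) : ‖u8 i‖ = 1 := by
  have h := u8_self i
  rw [real_inner_self_eq_norm_sq] at h
  nlinarith [norm_nonneg (u8 i)]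

lemma u8_le (i j : Fin 8) (h : i ≠ j) : |⟪u8 i, u8 j⟫| ≤ 0.647588979 := by
  have hi : (0 : ℝ) < d8 i i := by exact_mod_cast d8_pos i
  have hj : (0 : ℝ) < d8 j j := by exact_mod_cast d8_pos j
  have hle : (d8 i j : ℝ) * d8 i j * 1000000000000000000 ≤
      647588979 * 647588979 * (d8 i i * d8 j j) := by exact_mod_cast d8_le i j h
  apply abs_le_of_sq_le_sq _ (by norm_num)
  rw [u8_inner, div_pow, mul_pow, Real.sq_sqrt hi.le, Real.sq_sqrt hj.le,
    div_le_iff₀ (mul_pos hi hj)]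
  linarith

lemma u8_inj : Function.Injective u8 := by
  intro i j hij
  by_contra h
  have h1 := u8_le i j h
  rw [← hij, u8_self] at h1
  norm_num at h1

lemma exists8 : ∃ Φ : Finset E3, Φ.card = 8 ∧ (∀ x ∈ Φ, ‖x‖ = 1) ∧
    coherence Φ ≤ 0.647588979 := by
  classical
  refine ⟨Finset.univ.image u8, ?_, ?_, ?_⟩
  · rw [Finset.card_image_of_injective _ u8_inj]; simp
  · intro x hx
    obtain ⟨i, -, rfl⟩ := Finset.mem_image.1 hx
    exact u8_norm i
  · apply Real.sSup_le _ (by norm_num)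
    rintro r ⟨x, hx, y, hy, hxy, rfl⟩
    obtain ⟨i, -, rfl⟩ := Finset.mem_image.1 hx
    obtain ⟨j, -, rfl⟩ := Finset.mem_image.1 hy
    exact u8_le i j (fun h => hxy (by rw [h]))

lemma sum_prod_nonneg (Φ : Finset E3) (f : E3 → ℝ) : 0 ≤ ∑ x ∈ Φ, ∑ y ∈ Φ, f x * f y := by
  rw [← Finset.sum_mul_sum]
  exact mul_self_nonneg _

lemma coh_bdd (Φ : Finset E3) (h1 : ∀ x ∈ Φ, ‖x‖ = 1) :
    BddAbove {r : ℝ | ∃ x ∈ Φ, ∃ y ∈ Φ, x ≠ y ∧ r = |⟪x, y⟫|} := by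
  refine ⟨1, ?_⟩
  rintro r ⟨x, hx, y, hy, -, rfl⟩
  have := abs_real_inner_le_norm x y
  rwa [h1 x hx, h1 y hy, one_mul] at this

/-- Degree 4 addition formula. -/
lemma add4 (x y : E3) (hx : x 0 ^ 2 + x 1 ^ 2 + x 2 ^ 2 = 1)
    (hy : y 0 ^ 2 + y 1 ^ 2 + y 2 ^ 2 = 1) (Y : Fin 9 → E3 → ℝ)
    (hY : Y = ![fun v => 3 * (v 0 ^ 2 + v 1 ^ 2) ^ 2 - 24 * v 2 ^ 2 * (v 0 ^ 2 + v 1 ^ 2)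
        + 8 * v 2 ^ 4,
      fun v => v 0 * v 2 * (4 * v 2 ^ 2 - 3 * v 0 ^ 2 - 3 * v 1 ^ 2),
      fun v => v 1 * v 2 * (4 * v 2 ^ 2 - 3 * v 0 ^ 2 - 3 * v 1 ^ 2),
      fun v => v 0 * v 1 * (6 * v 2 ^ 2 - v 0 ^ 2 - v 1 ^ 2),
      fun v => (v 0 ^ 2 - v 1 ^ 2) * (6 * v 2 ^ 2 - v 0 ^ 2 - v 1 ^ 2),
      fun v => v 0 * v 2 * (v 0 ^ 2 - 3 * v 1 ^ 2),
      fun v => v 1 * v 2 * (3 * v 0 ^ 2 - v 1 ^ 2),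
      fun v => v 0 * v 1 * (v 0 ^ 2 - v 1 ^ 2),
      fun v => v 0 ^ 4 - 6 * v 0 ^ 2 * v 1 ^ 2 + v 1 ^ 4]) :
    35 * ⟪x, y⟫ ^ 4 - 30 * ⟪x, y⟫ ^ 2 + 3 =
      1 / 8 * (Y 0 x * Y 0 y) + 5 * (Y 1 x * Y 1 y) + 5 * (Y 2 x * Y 2 y)
      + 10 * (Y 3 x * Y 3 y) + 5 / 2 * (Y 4 x * Y 4 y) + 35 * (Y 5 x * Y 5 y)
      + 35 * (Y 6 x * Y 6 y) + 70 * (Y 7 x * Y 7 y) + 35 / 8 * (Y 8 x * Y 8 y) := by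
  have e : 35 * ⟪x, y⟫ ^ 4 - 30 * ⟪x, y⟫ ^ 2 + 3 = 35 * ⟪x, y⟫ ^ 4
      - 30 * ⟪x, y⟫ ^ 2 * ((x 0 ^ 2 + x 1 ^ 2 + x 2 ^ 2) * (y 0 ^ 2 + y 1 ^ 2 + y 2 ^ 2))
      + 3 * ((x 0 ^ 2 + x 1 ^ 2 + x 2 ^ 2) * (y 0 ^ 2 + y 1 ^ 2 + y 2 ^ 2)) ^ 2 := by
    rw [hx, hy]; ring
  rw [e, inner3, hY]
  simp [Matrix.cons_val]
  ring

/-- Degree 2 addition formula. -/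
lemma add2 (x y : E3) (hx : x 0 ^ 2 + x 1 ^ 2 + x 2 ^ 2 = 1)
    (hy : y 0 ^ 2 + y 1 ^ 2 + y 2 ^ 2 = 1) (Z : Fin 5 → E3 → ℝ)
    (hZ : Z = ![fun v => v 0 * v 1, fun v => v 1 * v 2, fun v => v 0 * v 2,
      fun v => v 0 ^ 2 - v 1 ^ 2, fun v => v 0 ^ 2 + v 1 ^ 2 - 2 * v 2 ^ 2]) :
    3 * ⟪x, y⟫ ^ 2 - 1 =
      6 * (Z 0 x * Z 0 y) + 6 * (Z 1 x * Z 1 y) + 6 * (Z 2 x * Z 2 y)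
      + 3 / 2 * (Z 3 x * Z 3 y) + 1 / 2 * (Z 4 x * Z 4 y) := by
  have e : 3 * ⟪x, y⟫ ^ 2 - 1 = 3 * ⟪x, y⟫ ^ 2
      - (x 0 ^ 2 + x 1 ^ 2 + x 2 ^ 2) * (y 0 ^ 2 + y 1 ^ 2 + y 2 ^ 2) := by
    rw [hx, hy]; ring
  rw [e, inner3, hZ]
  simp [Matrix.cons_val]
  ring

lemma lower8 (Φ : Finset E3) (hc : Φ.card = 8) (h1 : ∀ x ∈ Φ, ‖x‖ = 1) :
    0.6 ≤ coherence Φ := by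
  classical
  by_contra hlt
  push Not at hlt
  have hself : ∀ x ∈ Φ, ⟪x, x⟫ = 1 := by
    intro x hx
    rw [real_inner_self_eq_norm_sq, h1 x hx]; norm_num
  have hsq : ∀ x ∈ Φ, x 0 ^ 2 + x 1 ^ 2 + x 2 ^ 2 = 1 := by
    intro x hx
    have := hself x hx
    rw [inner3] at this
    linarith
  have hle0 : ∀ x ∈ Φ, ∀ y ∈ Φ, x ≠ y → |⟪x, y⟫| ≤ coherence Φ := fun x hx y hy hxy =>
    le_csSup (coh_bdd Φ h1) ⟨x, hx, y, hy, hxy, rfl⟩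
  obtain ⟨p, hp, q, hq, hpq⟩ := Finset.one_lt_card.1 (by omega : 1 < Φ.card)
  have hcn : 0 ≤ coherence Φ := (abs_nonneg _).trans (hle0 p hp q hq hpq)
  set c := coherence Φ with hcdef
  have hcc : c ^ 2 < 9 / 25 := by norm_num at hlt; nlinarith
  have hle : ∀ x ∈ Φ, ∀ y ∈ Φ, x ≠ y → ⟪x, y⟫ ^ 2 ≤ c ^ 2 := fun x hx y hy hxy =>
    sq_le_sq.2 (by rw [abs_of_nonneg hcn]; exact hle0 x hx y hy hxy)
  obtain ⟨Y, hY⟩ : ∃ Y : Fin 9 → E3 → ℝ, Y = _ := ⟨_, rfl⟩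
  obtain ⟨Z, hZ⟩ : ∃ Z : Fin 5 → E3 → ℝ, Z = _ := ⟨_, rfl⟩
  have hA : 0 ≤ ∑ x ∈ Φ, ∑ y ∈ Φ, (35 * ⟪x, y⟫ ^ 4 - 30 * ⟪x, y⟫ ^ 2 + 3) := by
    rw [Finset.sum_congr rfl fun x hx => Finset.sum_congr rfl fun y hy =>
      add4 x y (hsq x hx) (hsq y hy) Y hY]
    simp only [Finset.sum_add_distrib, ← Finset.mul_sum]
    simp only [Finset.mul_sum]
    have := fun i => sum_prod_nonneg Φ (Y i)
    simp only [← Finset.mul_sum] at *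
    linarith [this 0, this 1, this 2, this 3, this 4, this 5, this 6, this 7, this 8]
  have hB : 0 ≤ ∑ x ∈ Φ, ∑ y ∈ Φ, (3 * ⟪x, y⟫ ^ 2 - 1) := by
    rw [Finset.sum_congr rfl fun x hx => Finset.sum_congr rfl fun y hy =>
      add2 x y (hsq x hx) (hsq y hy) Z hZ]
    simp only [Finset.sum_add_distrib]
    have := fun i => sum_prod_nonneg Φ (Z i)
    simp only [← Finset.mul_sum] at *
    linarith [this 0, this 1, this 2, this 3, this 4]
  -- use a parameter `s = c^2 < 9/25`
  have hU : ∑ x ∈ Φ, ∑ y ∈ Φ, (⟪x, y⟫ ^ 4 - c ^ 2 * ⟪x, y⟫ ^ 2) ≤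
      ∑ x ∈ Φ, ∑ y ∈ Φ, (if x = y then 1 - c ^ 2 else 0) := by
    refine Finset.sum_le_sum fun x hx => Finset.sum_le_sum fun y hy => ?_
    split_ifs with h
    · subst h; rw [hself x hx]; norm_num
    · have := hle x hx y hy h
      nlinarith [sq_nonneg ⟪x, y⟫]
  have hD : ∑ x ∈ Φ, ∑ y ∈ Φ, (if x = y then 1 - c ^ 2 else 0) = 8 * (1 - c ^ 2) := by
    simp [hc]; ring
  have hN : ∑ x ∈ Φ, ∑ y ∈ Φ, (1 : ℝ) = 64 := by
    simp [hc]; norm_num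
  have hE : ∑ x ∈ Φ, ∑ y ∈ Φ, (⟪x, y⟫ ^ 4 - c ^ 2 * ⟪x, y⟫ ^ 2) =
      1 / 35 * ∑ x ∈ Φ, ∑ y ∈ Φ, (35 * ⟪x, y⟫ ^ 4 - 30 * ⟪x, y⟫ ^ 2 + 3)
      + (2 / 7 - c ^ 2 / 3) * ∑ x ∈ Φ, ∑ y ∈ Φ, (3 * ⟪x, y⟫ ^ 2 - 1)
      + (1 / 5 - c ^ 2 / 3) * ∑ x ∈ Φ, ∑ y ∈ Φ, (1 : ℝ) := by
    simp only [Finset.mul_sum, ← Finset.sum_add_distrib]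
    refine Finset.sum_congr rfl fun x hx => Finset.sum_congr rfl fun y hy => ?_
    ring
  have hM : 0 ≤ (2 / 7 - c ^ 2 / 3) * ∑ x ∈ Φ, ∑ y ∈ Φ, (3 * ⟪x, y⟫ ^ 2 - 1) :=
    mul_nonneg (by linarith) hB
  rw [hE, hD, hN] at hU
  linarith

/-- The optimal coherence of eight lines satisfies 0.6 ≤ μ₈ ≤ 0.647588979. -/
theorem mu8_bounds : 0.6 ≤ muOpt 8 ∧ muOpt 8 ≤ 0.647588979 := by
  obtain ⟨Φ, hc, h1, hle⟩ := exists8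
  constructor
  · refine le_csInf ⟨_, Φ, hc, h1, rfl⟩ ?_
    rintro r ⟨Ψ, hc, h1, rfl⟩
    exact lower8 Ψ hc h1
  · refine le_trans (csInf_le ⟨0.6, ?_⟩ ⟨Φ, hc, h1, rfl⟩) hle
    rintro r ⟨Ψ, hc, h1, rfl⟩
    exact lower8 Ψ hc h1
end
end

section
/- Adjacent angles of a convex spherical rhombus: let 0 < ψ < π/2 and let x₁, x₂, x₃, x₄ be four distinct unit vectors in ℝ³ with d(x₁,x₂) = d(x₂,x₃) = d(x₃,x₄) = d(x₄,x₁) = ψ, and suppose there exist a unit vector m and reals s, t > 0 with x₁ + x₃ = s·m and x₂ + x₄ = t·m (convexity of the rhombus). Then the adjacent interior angles θ := ∠(x₂,x₁,x₄) and θ' := ∠(x₁,x₂,x₃) satisfy tan(θ/2)·tan(θ'/2) = sec(ψ). -/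
open scoped RealInnerProductSpace

noncomputable section

/-- Geodesic distance between unit vectors on the sphere. -/
def gdist (x y : E3) : ℝ := Real.arccos ⟪x, y⟫

/-- The minimum geodesic distance among distinct points of a finite set. -/
def psi (X : Finset E3) : ℝ :=
  sInf {r : ℝ | ∃ x ∈ X, ∃ y ∈ X, x ≠ y ∧ r = gdist x y}

/-- The unit tangent vector at `x` pointing toward `y`. -/
def tang (x y : E3) : E3 := ‖y - ⟪x, y⟫ • x‖⁻¹ • (y - ⟪x, y⟫ • x)

/-- The spherical angle `∠(y, x, z)` at the vertex `x` between `y` and `z`. -/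
def ang (y x z : E3) : ℝ := Real.arccos ⟪tang x y, tang x z⟫
lemma half_inner (x y m : E3) (hx : ‖x‖ = 1) (hy : ‖y‖ = 1) (hm : ‖m‖ = 1) (s : ℝ)
    (hs : 0 < s) (hne : x ≠ y) (h : x + y = s • m) :
    ⟪x, m⟫ = s / 2 ∧ ⟪x, y⟫ = 2 * (s / 2) ^ 2 - 1 ∧ s / 2 < 1 := by
  have hxx : ⟪x, x⟫ = 1 := by rw [real_inner_self_eq_norm_sq, hx]; norm_num
  have hyy : ⟪y, y⟫ = 1 := by rw [real_inner_self_eq_norm_sq, hy]; norm_num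
  have hmm : ⟪m, m⟫ = 1 := by rw [real_inner_self_eq_norm_sq, hm]; norm_num
  have h1 : ⟪x, x + y⟫ = s * ⟪x, m⟫ := by rw [h, real_inner_smul_right]
  have h2 : ⟪x + y, x + y⟫ = s * (s * ⟪m, m⟫) := by
    rw [h, real_inner_smul_right, real_inner_smul_left]
  rw [inner_add_right, hxx] at h1
  rw [inner_add_right, inner_add_left, inner_add_left, hxx, hyy, hmm, real_inner_comm x y] at h2
  have h3 : ⟪x, y⟫ < 1 := (inner_lt_one_iff_real_of_norm_eq_one hx hy).2 hne
  refine ⟨?_, by linarith, by nlinarith⟩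
  have : s * ⟪x, m⟫ = s * (s / 2) := by linarith
  exact mul_left_cancel₀ hs.ne' this

lemma tan_half_arccos (C : ℝ) (h1 : -1 < C) (h2 : C ≤ 1) :
    0 ≤ Real.tan (Real.arccos C / 2) ∧
      Real.tan (Real.arccos C / 2) ^ 2 = (1 - C) / (1 + C) := by
  have h0 := Real.arccos_nonneg C
  have hpi := Real.arccos_le_pi C
  refine ⟨Real.tan_nonneg_of_nonneg_of_le_pi_div_two (by linarith) (by linarith), ?_⟩
  rw [Real.tan_eq_sin_div_cos, div_pow, Real.sin_sq, Real.cos_sq,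
    mul_div_cancel₀ _ (two_ne_zero), Real.cos_arccos h1.le h2]
  have : 1 + C ≠ 0 := by linarith
  field_simp
  ring

lemma tan_ang (x y z : E3) (hx : ‖x‖ = 1) (hy : ‖y‖ = 1) (hz : ‖z‖ = 1) (p q : ℝ)
    (hp0 : 0 < p) (hq0 : 0 < q) (hp : 0 < 1 - p ^ 2) (hq : 0 < 1 - q ^ 2)
    (hpq : 0 < 1 - (p * q) ^ 2)
    (hxy : ⟪x, y⟫ = p * q) (hxz : ⟪x, z⟫ = p * q) (hyz : ⟪y, z⟫ = 2 * q ^ 2 - 1) :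
    0 ≤ Real.tan (ang y x z / 2) ∧
      Real.tan (ang y x z / 2) ^ 2 = (1 - q ^ 2) / (q ^ 2 * (1 - p ^ 2)) := by
  have hin : ∀ u v : E3, ⟪x, u⟫ = p * q → ⟪x, v⟫ = p * q →
      ⟪u - (p * q) • x, v - (p * q) • x⟫ = ⟪u, v⟫ - (p * q) ^ 2 := by
    intro u v hu hv
    have hxx : ⟪x, x⟫ = 1 := by rw [real_inner_self_eq_norm_sq, hx]; norm_num
    have hu' : ⟪u, x⟫ = p * q := by rw [real_inner_comm]; exact hu
    simp only [inner_sub_left, inner_sub_right, real_inner_smul_left, real_inner_smul_right,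
      hxx, hu', hv]
    ring
  have hn : ∀ u : E3, ‖u‖ = 1 → ⟪x, u⟫ = p * q →
      ‖u - (p * q) • x‖ = Real.sqrt (1 - (p * q) ^ 2) := by
    intro u hu h
    rw [norm_eq_sqrt_real_inner, hin u u h h, real_inner_self_eq_norm_sq, hu, one_pow]
  have hC : ⟪tang x y, tang x z⟫ = (2 * q ^ 2 - 1 - (p * q) ^ 2) / (1 - (p * q) ^ 2) := by
    rw [tang, tang, hxy, hxz, real_inner_smul_left, real_inner_smul_right, hin y z hxy hxz,
      hn y hy hxy, hn z hz hxz, hyz, ← mul_assoc, ← mul_inv, Real.mul_self_sqrt hpq.le]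
    ring
  have hqp : 0 < q ^ 2 * (1 - p ^ 2) := by positivity
  have e1 : 1 + (2 * q ^ 2 - 1 - (p * q) ^ 2) / (1 - (p * q) ^ 2)
      = 2 * (q ^ 2 * (1 - p ^ 2)) / (1 - (p * q) ^ 2) := by
    rw [eq_div_iff hpq.ne', add_mul, div_mul_cancel₀ _ hpq.ne']; ring
  have e2 : 1 - (2 * q ^ 2 - 1 - (p * q) ^ 2) / (1 - (p * q) ^ 2)
      = 2 * (1 - q ^ 2) / (1 - (p * q) ^ 2) := by
    rw [eq_div_iff hpq.ne', sub_mul, div_mul_cancel₀ _ hpq.ne']; ring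
  have p1 : 0 < 2 * (q ^ 2 * (1 - p ^ 2)) / (1 - (p * q) ^ 2) := by positivity
  have p2 : 0 < 2 * (1 - q ^ 2) / (1 - (p * q) ^ 2) := by positivity
  have T := tan_half_arccos ((2 * q ^ 2 - 1 - (p * q) ^ 2) / (1 - (p * q) ^ 2))
    (by linarith) (by linarith)
  rw [ang, hC]
  refine ⟨T.1, ?_⟩
  rw [T.2, e1, e2, div_div_div_cancel_right₀ hpq.ne', mul_div_mul_left _ _ two_ne_zero]

/-- Adjacent interior angles θ, θ' of a convex spherical rhombus of side ψ satisfy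
tan(θ/2)·tan(θ'/2) = sec ψ. -/
theorem rhombus_adjacent_angles {π : ℝ} (ψ : ℝ) (hψ0 : 0 < ψ) (hψ : ψ < π / 2)
    (x₁ x₂ x₃ x₄ : E3)
    (h1 : ‖x₁‖ = 1) (h2 : ‖x₂‖ = 1) (h3 : ‖x₃‖ = 1) (h4 : ‖x₄‖ = 1)
    (hne12 : x₁ ≠ x₂) (hne13 : x₁ ≠ x₃) (hne14 : x₁ ≠ x₄)
    (hne23 : x₂ ≠ x₃) (hne24 : x₂ ≠ x₄) (hne34 : x₃ ≠ x₄)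
    (h12 : gdist x₁ x₂ = ψ) (h23 : gdist x₂ x₃ = ψ)
    (h34 : gdist x₃ x₄ = ψ) (h41 : gdist x₄ x₁ = ψ)
    (m : E3) (hm : ‖m‖ = 1) (s t : ℝ) (hs : 0 < s) (ht : 0 < t)
    (hconv₁ : x₁ + x₃ = s • m) (hconv₂ : x₂ + x₄ = t • m) :
    Real.tan (ang x₂ x₁ x₄ / 2) * Real.tan (ang x₁ x₂ x₃ / 2) = (Real.cos ψ)⁻¹ := by
  have hc : ∀ x y : E3, ‖x‖ = 1 → ‖y‖ = 1 → gdist x y = ψ → ⟪x, y⟫ = Real.cos ψ := by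
    intro x y hx hy h
    have := abs_le.1 (abs_real_inner_le_norm x y)
    rw [hx, hy, one_mul] at this
    rw [← h, gdist, Real.cos_arccos this.1 this.2]
  have i12 := hc _ _ h1 h2 h12
  have i23 := hc _ _ h2 h3 h23
  have i41 := hc _ _ h4 h1 h41
  have i14 : ⟪x₁, x₄⟫ = Real.cos ψ := by rw [real_inner_comm]; exact i41
  have i21 : ⟪x₂, x₁⟫ = Real.cos ψ := by rw [real_inner_comm]; exact i12
  have a13 := half_inner x₁ x₃ m h1 h3 hm s hs hne13 hconv₁
  have a24 := half_inner x₂ x₄ m h2 h4 hm t ht hne24 hconv₂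
  obtain ⟨e1, e2, e3⟩ := a13
  obtain ⟨f1, f2, f3⟩ := a24
  have hcc : Real.cos ψ = (s / 2) * (t / 2) := by
    have h : ⟪x₁, x₂ + x₄⟫ = t * ⟪x₁, m⟫ := by rw [hconv₂, real_inner_smul_right]
    rw [inner_add_right, i12, i14, e1] at h
    linarith
  obtain ⟨p, hp⟩ : ∃ p, p = s / 2 := ⟨_, rfl⟩
  obtain ⟨q, hq⟩ : ∃ q, q = t / 2 := ⟨_, rfl⟩
  rw [← hp] at e2 e3 hcc
  rw [← hq] at f2 f3 hcc
  have hp0 : 0 < p := by linarith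
  have hq0 : 0 < q := by linarith
  have hp2 : 0 < 1 - p ^ 2 := by nlinarith
  have hq2 : 0 < 1 - q ^ 2 := by nlinarith
  have hpq : 0 < 1 - (p * q) ^ 2 := by nlinarith [mul_pos hp2 (pow_pos hq0 2)]
  rw [hcc] at i12 i14 i21 i23 ⊢
  have A := tan_ang x₁ x₂ x₄ h1 h2 h4 p q hp0 hq0 hp2 hq2 hpq i12 i14 f2
  have B := tan_ang x₂ x₁ x₃ h2 h1 h3 q p hq0 hp0 hq2 hp2 (by rwa [mul_comm q p])
    (by rw [i21, mul_comm]) (by rw [i23, mul_comm]) e2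
  have key : (Real.tan (ang x₂ x₁ x₄ / 2) * Real.tan (ang x₁ x₂ x₃ / 2)) ^ 2
      = ((p * q)⁻¹) ^ 2 := by
    rw [mul_pow, A.2, B.2]
    field_simp
  exact (pow_left_inj₀ (mul_nonneg A.1 B.1) (by positivity) two_ne_zero).1 key
end
end

section
/- Let 0 < ψ < π/2 and let x, x₁, x₂, x₃ be unit vectors in ℝ³ with ⟨x,x₁⟩ = ⟨x₁,x₂⟩ = ⟨x₂,x₃⟩ = cos(ψ) and ⟨x₃,x⟩ = −cos(ψ) (a path of four edges of geodesic length ψ from x to −x). Let α := ∠(x,x₁,x₂) and γ := ∠(x₂,x₃,−x). Then cos(α) + cos(γ) = −2·cot²(ψ). -/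
open scoped RealInnerProductSpace

noncomputable section

theorem norm_tang_aux (ψ : ℝ) (x y : E3) (hx : ‖x‖ = 1) (hy : ‖y‖ = 1)
    (e : ⟪x, y⟫ = Real.cos ψ) : ‖y - ⟪x, y⟫ • x‖ = |Real.sin ψ| := by
  rw [← abs_of_nonneg (norm_nonneg (y - ⟪x, y⟫ • x)), ← sq_eq_sq_iff_abs_eq_abs,
    norm_sub_sq_real, inner_smul_right, norm_smul, real_inner_comm x y, hx, hy, e, Real.norm_eq_abs,
    mul_one, sq_abs, Real.sin_sq]
  ring

theorem abs_inner_tang_le (x y z : E3) : |⟪tang x y, tang x z⟫| ≤ 1 := by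
  have h : ∀ w : E3, ‖tang x w‖ ≤ 1 := by
    intro w
    unfold tang
    rw [norm_smul, norm_inv, norm_norm]
    exact inv_mul_le_one
  calc |⟪tang x y, tang x z⟫| ≤ ‖tang x y‖ * ‖tang x z‖ := abs_real_inner_le_norm _ _
    _ ≤ 1 := mul_le_one₀ (h y) (norm_nonneg _) (h z)

theorem cos_ang_aux (ψ : ℝ) (x y z : E3) (hx : ‖x‖ = 1) (hy : ‖y‖ = 1) (hz : ‖z‖ = 1)
    (e : ⟪x, y⟫ = Real.cos ψ) (e' : ⟪x, z⟫ = Real.cos ψ) :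
    Real.cos (ang y x z) = (⟪y, z⟫ - Real.cos ψ ^ 2) / Real.sin ψ ^ 2 := by
  have hb := abs_le.1 (abs_inner_tang_le x y z)
  unfold ang
  rw [Real.cos_arccos hb.1 hb.2]
  unfold tang
  rw [norm_tang_aux ψ x y hx hy e, norm_tang_aux ψ x z hx hz e', inner_smul_left,
    inner_smul_right, inner_sub_left, inner_sub_right, inner_sub_right, inner_smul_left,
    inner_smul_left, inner_smul_right, inner_smul_right, real_inner_comm x y,
    real_inner_self_eq_norm_sq, hx, e, e', ← sq_abs (Real.sin ψ)]
  simp only [conj_trivial]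
  rw [div_eq_mul_inv, ← inv_pow]
  ring

/-- Along a four-edge equilateral path from x to −x, the first and third interior
angles α, γ satisfy cos α + cos γ = −2 cot² ψ. -/
theorem path_angles_sum {π : ℝ} (ψ : ℝ) (hψ0 : 0 < ψ) (hψ : ψ < π / 2)
    (x x₁ x₂ x₃ : E3)
    (hx : ‖x‖ = 1) (h1 : ‖x₁‖ = 1) (h2 : ‖x₂‖ = 1) (h3 : ‖x₃‖ = 1)
    (e1 : ⟪x, x₁⟫ = Real.cos ψ) (e2 : ⟪x₁, x₂⟫ = Real.cos ψ)
    (e3 : ⟪x₂, x₃⟫ = Real.cos ψ) (e4 : ⟪x₃, x⟫ = -Real.cos ψ) :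
    Real.cos (ang x x₁ x₂) + Real.cos (ang x₂ x₃ (-x)) =
      -2 * (Real.cos ψ / Real.sin ψ) ^ 2 := by
  rw [cos_ang_aux ψ x₁ x x₂ h1 hx h2 (by rw [real_inner_comm, e1]) e2,
    cos_ang_aux ψ x₃ x₂ (-x) h3 h2 (by rw [norm_neg, hx]) (by rw [real_inner_comm, e3])
      (by rw [inner_neg_right, e4, neg_neg]), inner_neg_right, real_inner_comm x x₂, div_pow]
  ring
end
end

section
/- Let 0 < ψ < π/2 and let x, x₁, x₂, x₃ be unit vectors in ℝ³ with ⟨x,x₁⟩ = ⟨x₁,x₂⟩ = ⟨x₂,x₃⟩ = cos(ψ) and ⟨x₃,x⟩ = −cos(ψ) (a path of four edges of geodesic length ψ from x to −x). Let β := ∠(x₁,x₂,x₃). Then cos(β) ≤ 1 − 2·cot²(ψ). -/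
open scoped RealInnerProductSpace

noncomputable section

/-- Along a four-edge equilateral path from x to −x, the middle interior angle β
satisfies cos β ≤ 1 − 2 cot² ψ. -/
theorem path_angle_middle {π : ℝ} (ψ : ℝ) (hψ0 : 0 < ψ) (hψ : ψ < π / 2)
    (x x₁ x₂ x₃ : E3)
    (hx : ‖x‖ = 1) (h1 : ‖x₁‖ = 1) (h2 : ‖x₂‖ = 1) (h3 : ‖x₃‖ = 1)
    (e1 : ⟪x, x₁⟫ = Real.cos ψ) (e2 : ⟪x₁, x₂⟫ = Real.cos ψ)
    (e3 : ⟪x₂, x₃⟫ = Real.cos ψ) (e4 : ⟪x₃, x⟫ = -Real.cos ψ) :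
    Real.cos (ang x₁ x₂ x₃) ≤ 1 - 2 * (Real.cos ψ / Real.sin ψ) ^ 2 := by
  have sq := Real.sin_sq_add_cos_sq ψ
  set c := Real.cos ψ with hc
  set s := Real.sin ψ with hs
  by_cases h0 : s = 0
  · rw [h0]; simpa using Real.cos_le_one _
  have hs2 : 0 < s ^ 2 := by positivity
  have e2' : ⟪x₂, x₁⟫ = c := by rw [real_inner_comm]; exact e2
  have e4' : ⟪x, x₃⟫ = -c := by rw [real_inner_comm]; exact e4
  have n1 : ‖x₁ - c • x₂‖ ^ 2 = s ^ 2 := by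
    rw [norm_sub_sq_real, inner_smul_right, norm_smul, e2, h1, h2, mul_one, Real.norm_eq_abs,
      sq_abs]
    linarith
  have n3 : ‖x₃ - c • x₂‖ ^ 2 = s ^ 2 := by
    rw [norm_sub_sq_real, inner_smul_right, norm_smul, real_inner_comm, e3, h3, h2, mul_one,
      Real.norm_eq_abs, sq_abs]
    linarith
  have m1 : ‖x₁ - c • x₂‖ = |s| := by
    rw [← abs_of_nonneg (norm_nonneg (x₁ - c • x₂))]; exact (sq_eq_sq_iff_abs_eq_abs _ _).1 n1
  have m3 : ‖x₃ - c • x₂‖ = |s| := by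
    rw [← abs_of_nonneg (norm_nonneg (x₃ - c • x₂))]; exact (sq_eq_sq_iff_abs_eq_abs _ _).1 n3
  have hin : ⟪x₁ - c • x₂, x₃ - c • x₂⟫ = ⟪x₁, x₃⟫ - c ^ 2 := by
    simp only [inner_sub_left, inner_sub_right, inner_smul_left, inner_smul_right, e2, e3,
      real_inner_self_eq_norm_sq, h2, conj_trivial]
    ring
  have ht : ⟪tang x₂ x₁, tang x₂ x₃⟫ = (⟪x₁, x₃⟫ - c ^ 2) / s ^ 2 := by
    unfold tang
    rw [e2', e3, m1, m3, inner_smul_left, inner_smul_right, hin, conj_trivial, ← sq_abs s]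
    field_simp
  have hcs := abs_real_inner_le_norm (x₁ - c • x₂) (x₃ - c • x₂)
  rw [hin, m1, m3, abs_mul_abs_self, abs_le] at hcs
  have key : ⟪x₁, x₃⟫ ≤ 1 - 2 * c ^ 2 := by
    have h := abs_real_inner_le_norm x (x₁ - x₃)
    rw [inner_sub_right, e1, e4', hx, one_mul] at h
    have h' := pow_le_pow_left₀ (abs_nonneg _) h 2
    rw [sq_abs, norm_sub_sq_real, h1, h3] at h'
    nlinarith
  unfold ang
  rw [ht, Real.cos_arccos]
  · rw [div_pow, div_le_iff₀ hs2, sub_mul, mul_assoc, div_mul_cancel₀ _ hs2.ne']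
    linarith
  · rw [le_div_iff₀ hs2]; nlinarith
  · rw [div_le_iff₀ hs2]; nlinarith
end
end

section
/- Existence of an equilibrium stress (KKT conditions): let n ≥ 2 and let X = {x₁,…,x₂ₙ} be an antipodal set of 2n distinct unit vectors in ℝ³ (with x_{i+n} = −x_i for 1 ≤ i ≤ n) that is optimal, i.e., ψ(Y) ≤ ψ(X) for every antipodal set Y of 2n distinct unit vectors. For each i let J(i) := { j : d(x_i,x_j) = ψ(X) }. Then there exist real coefficients ω_{ij} = ω_{ji} for 1 ≤ i,j ≤ 2n, i ≠ j, such that: (i) ω_{ij} ≥ 0 for all i ≠ j; (ii) ω_{ij} = 0 whenever j ∉ J(i); (iii) the sum of all ω_{ij} over i ≠ j equals 1; and (iv) for each i, the sum over j ∈ J(i) of ω_{ij}·v_{x_i x_j} equals the zero vector. -/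
open scoped RealInnerProductSpace

noncomputable section

open Filter Topology in
theorem aux_gordan {V ι : Type*} [NormedAddCommGroup V] [InnerProductSpace ℝ V] [CompleteSpace V]
    (P : Finset ι) (a : ι → V) :
    (∃ w : ι → ℝ, (∀ i, 0 ≤ w i) ∧ (∀ i, i ∉ P → w i = 0) ∧ ∑ i ∈ P, w i = 1 ∧
      ∑ i ∈ P, w i • a i = 0) ∨ ∃ u : V, ∀ i ∈ P, ⟪u, a i⟫ < 0 := by
  classical
  let L : (P → ℝ) →ₗ[ℝ] V := Fintype.linearCombination ℝ (fun i : P => a i)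
  have hL : ∀ w : P → ℝ, L w = ∑ i, w i • a i := fun w => by
    simp [L, Fintype.linearCombination_apply]
  by_cases h0 : (0 : V) ∈ L '' stdSimplex ℝ P
  · left
    obtain ⟨w, ⟨hw0, hw1⟩, hw⟩ := h0
    rw [hL] at hw
    refine ⟨fun i => if h : i ∈ P then w ⟨i, h⟩ else 0, ?_, ?_, ?_, ?_⟩
    · intro i
      dsimp only
      split_ifs with h
      · exact hw0 _
      · exact le_rfl
    · intro i hi
      simp [hi]
    · rw [← Finset.sum_coe_sort, ← hw1]
      exact Finset.sum_congr rfl (fun i _ => by simp)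
    · rw [← Finset.sum_coe_sort, ← hw]
      exact Finset.sum_congr rfl (fun i _ => by simp)
  · right
    have hc : IsCompact (L '' stdSimplex ℝ P) :=
      (isCompact_stdSimplex ℝ P).image L.continuous_of_finiteDimensional
    have hconv : Convex ℝ (L '' stdSimplex ℝ P) := (convex_stdSimplex ℝ P).linear_image L
    obtain ⟨f, s, hf0, hf⟩ := geometric_hahn_banach_point_closed hconv hc.isClosed h0
    refine ⟨-(InnerProductSpace.toDual ℝ V).symm f, fun i hi => ?_⟩
    rw [inner_neg_left, InnerProductSpace.toDual_symm_apply]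
    have := hf (a i) ⟨Pi.single ⟨i, hi⟩ 1, single_mem_stdSimplex ℝ _, by
      rw [hL, Finset.sum_eq_single ⟨i, hi⟩]
      · simp
      · intro b _ hb
        simp [hb]
      · simp⟩
    simp at hf0
    linarith

open Filter Topology in
theorem aux_deriv (x y u v : E3) (c : ℝ) (hx : ‖x‖ = 1) (hy : ‖y‖ = 1) (hc : ⟪x, y⟫ = c)
    (h : ⟪u, y - c • x⟫ + ⟪v, x - c • y⟫ < 0) :
    ∀ᶠ t : ℝ in 𝓝[>] 0, ⟪x + t • u, y + t • v⟫ < c * (‖x + t • u‖ * ‖y + t • v‖) := by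
  have hl : ∀ a b : E3, HasDerivAt (fun t : ℝ => a + t • b) b 0 := fun a b => by
    simpa using ((hasDerivAt_id (0:ℝ)).smul_const b).const_add a
  have hn : ∀ a b : E3, ‖a‖ = 1 → HasDerivAt (fun t : ℝ => ‖a + t • b‖) ⟪a, b⟫ 0 := by
    intro a b ha
    have h1 := (hl a b).norm_sq.sqrt (by simp [ha])
    simp [ha, Real.sqrt_sq] at h1
    exact h1
  have hg := ((hl x u).inner ℝ (hl y v)).sub (((hn x u hx).mul (hn y v hy)).const_mul c)
  set g : ℝ → ℝ := fun t => ⟪x + t • u, y + t • v⟫ - c * (‖x + t • u‖ * ‖y + t • v‖) with hgd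
  have hg' : HasDerivAt g (⟪u, y - c • x⟫ + ⟪v, x - c • y⟫) 0 := by
    refine HasDerivAt.congr_deriv hg ?_
    simp only [inner_sub_right, inner_smul_right, zero_smul, add_zero, hx, hy]
    rw [real_inner_comm v x, real_inner_comm u x, real_inner_comm v y]
    ring
  have h0 : g 0 = 0 := by simp [g, hx, hy, hc]
  have ht := (hasDerivAt_iff_tendsto_slope.1 hg').mono_left
    (nhdsWithin_mono (0:ℝ) (fun t (ht : 0 < t) => ht.ne'))
  filter_upwards [ht.eventually (gt_mem_nhds h), self_mem_nhdsWithin] with t h1 h2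
  have h2 : 0 < t := h2
  rw [slope_def_field, h0, sub_zero, sub_zero, div_lt_iff₀ h2, zero_mul] at h1
  simp only [g] at h1
  linarith

theorem aux_psi_set (X : Finset E3) :
    {r : ℝ | ∃ x ∈ X, ∃ y ∈ X, x ≠ y ∧ r = gdist x y}.Finite := by
  refine ((X ×ˢ X).finite_toSet.image (fun p => gdist p.1 p.2)).subset ?_
  rintro r ⟨x, hx, y, hy, -, rfl⟩
  exact ⟨(x, y), by simp [hx, hy], rfl⟩

theorem aux_psi_mem (X : Finset E3) (h : 1 < X.card) :
    ∃ x ∈ X, ∃ y ∈ X, x ≠ y ∧ psi X = gdist x y := by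
  obtain ⟨x, hx, y, hy, hxy⟩ := Finset.one_lt_card.1 h
  have hne : {r : ℝ | ∃ x ∈ X, ∃ y ∈ X, x ≠ y ∧ r = gdist x y}.Nonempty :=
    ⟨_, x, hx, y, hy, hxy, rfl⟩
  exact hne.csInf_mem (aux_psi_set X)

theorem aux_psi_le (X : Finset E3) {x y : E3} (hx : x ∈ X) (hy : y ∈ X) (h : x ≠ y) :
    psi X ≤ gdist x y :=
  csInf_le (aux_psi_set X).bddBelow ⟨x, hx, y, hy, h, rfl⟩

open Filter Topology in
theorem aux_perturb (n : ℕ) (hn : 2 ≤ n) (X : Finset E3)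
    (hcard : X.card = 2 * n) (hu : ∀ x ∈ X, ‖x‖ = 1) (hanti : ∀ x ∈ X, -x ∈ X)
    (hopt : ∀ Y : Finset E3, Y.card = 2 * n → (∀ y ∈ Y, ‖y‖ = 1) →
      (∀ y ∈ Y, -y ∈ Y) → psi Y ≤ psi X) (c : ℝ) (hc : c = Real.cos (psi X))
    (hpsi : psi X = Real.arccos c)
    (hle : ∀ x ∈ X, ∀ y ∈ X, x ≠ y → ⟪x, y⟫ ≤ c) (u : E3 → E3) (hodd : ∀ x, u (-x) = - u x)
    (h : ∀ x ∈ X, ∀ y ∈ X, x ≠ y → ⟪x, y⟫ = c → 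
      ⟪u x, y - c • x⟫ + ⟪u y, x - c • y⟫ < 0) : False := by
  classical
  have hcont : ∀ x : E3, Continuous (fun t : ℝ => x + t • u x) := fun x => by fun_prop
  have e1 : ∀ᶠ t : ℝ in 𝓝[>] 0, ∀ x ∈ X, x + t • u x ≠ 0 := by
    rw [Finset.eventually_all]
    intro x hx
    refine nhdsWithin_le_nhds ?_
    refine (hcont x).continuousAt.eventually_ne ?_
    have := hu x hx
    intro h0
    simp at h0
    simp [h0] at this
  have e2 : ∀ᶠ t : ℝ in 𝓝[>] 0, ∀ x ∈ X, ∀ y ∈ X, x ≠ y →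
      ⟪x + t • u x, y + t • u y⟫ < c * (‖x + t • u x‖ * ‖y + t • u y‖) := by
    rw [Finset.eventually_all]
    intro x hx
    rw [Finset.eventually_all]
    intro y hy
    rw [eventually_imp_distrib_left]
    intro hxy
    rcases (hle x hx y hy hxy).eq_or_lt with he | hlt
    · exact aux_deriv x y _ _ c (hu x hx) (hu y hy) he (h x hx y hy hxy he)
    · refine nhdsWithin_le_nhds ?_
      refine ContinuousAt.eventually_lt (f := fun t : ℝ => ⟪x + t • u x, y + t • u y⟫)
        (g := fun t : ℝ => c * (‖x + t • u x‖ * ‖y + t • u y‖)) ?_ ?_ ?_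
      · exact ((hcont x).inner (hcont y)).continuousAt
      · exact (continuous_const.mul ((hcont x).norm.mul (hcont y).norm)).continuousAt
      · simpa [hu x hx, hu y hy] using hlt
  obtain ⟨t, h1, h2⟩ := (e1.and e2).exists
  let φ : E3 → E3 := fun x => ‖x + t • u x‖⁻¹ • (x + t • u x)
  have hφ1 : ∀ x ∈ X, ‖φ x‖ = 1 := fun x hx => by
    have := norm_ne_zero_iff.2 (h1 x hx)
    simp only [φ, norm_smul, norm_inv, norm_norm]
    exact inv_mul_cancel₀ this
  have hφ2 : ∀ x ∈ X, ∀ y ∈ X, x ≠ y → ⟪φ x, φ y⟫ < c := fun x hx y hy hxy => by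
    have a1 := norm_pos_iff.2 (h1 x hx)
    have a2 := norm_pos_iff.2 (h1 y hy)
    have := h2 x hx y hy hxy
    simp only [φ, inner_smul_left, inner_smul_right]
    rw [← div_lt_iff₀ (by positivity)] at this
    refine lt_of_eq_of_lt ?_ this
    simp
    field_simp
  have hφodd : ∀ x, φ (-x) = - φ x := fun x => by
    have : -x + t • u (-x) = -(x + t • u x) := by rw [hodd]; simp; abel
    simp only [φ, this, norm_neg, smul_neg]
  have hc1 : c ≤ 1 := hc ▸ Real.cos_le_one _
  have hc2 : -1 ≤ c := hc ▸ Real.neg_one_le_cos _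
  have hinj : Set.InjOn φ X := by
    intro x hx y hy hxy
    by_contra hne
    have := hφ2 x hx y hy hne
    rw [hxy, real_inner_self_eq_norm_sq, hφ1 y hy] at this
    linarith
  have hYc : (X.image φ).card = 2 * n := by rw [Finset.card_image_of_injOn hinj, hcard]
  have hY := hopt (X.image φ) hYc
    (by simpa using hφ1)
    (by
      intro y hy
      obtain ⟨x, hx, rfl⟩ := Finset.mem_image.1 hy
      exact Finset.mem_image.2 ⟨-x, hanti x hx, hφodd x⟩)
  obtain ⟨p, hp, q, hq, hpq, he⟩ := aux_psi_mem (X.image φ) (by omega)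
  obtain ⟨x, hx, rfl⟩ := Finset.mem_image.1 hp
  obtain ⟨y, hy, rfl⟩ := Finset.mem_image.1 hq
  have hxy : x ≠ y := fun h => hpq (by rw [h])
  rw [he, hpsi, gdist] at hY
  have hb : -1 ≤ ⟪φ x, φ y⟫ := by
    have := abs_real_inner_le_norm (φ x) (φ y)
    rw [hφ1 x hx, hφ1 y hy] at this
    linarith [(abs_le.1 this).1]
  have := Real.arccos_lt_arccos hb (hφ2 x hx y hy hxy) hc1
  linarith

/-- KKT conditions: every optimal antipodal 2n-packing admits an equilibrium
stress matrix supported on the contact graph. -/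
theorem exists_equilibrium_stress (n : ℕ) (hn : 2 ≤ n) (X : Finset E3)
    (hcard : X.card = 2 * n) (hu : ∀ x ∈ X, ‖x‖ = 1) (hanti : ∀ x ∈ X, -x ∈ X)
    (hopt : ∀ Y : Finset E3, Y.card = 2 * n → (∀ y ∈ Y, ‖y‖ = 1) →
      (∀ y ∈ Y, -y ∈ Y) → psi Y ≤ psi X) :
    ∃ ω : E3 → E3 → ℝ,
      (∀ x y, ω x y = ω y x) ∧
      (∀ x y, 0 ≤ ω x y) ∧
      (∀ x y, ¬(x ∈ X ∧ y ∈ X ∧ x ≠ y ∧ gdist x y = psi X) → ω x y = 0) ∧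
      (∑ x ∈ X, ∑ y ∈ X, ω x y) = 1 ∧
      (∀ x ∈ X, (∑ y ∈ X, ω x y • tang x y) = 0) := by
  classical
  have hb : ∀ x ∈ X, ∀ y ∈ X, -1 ≤ ⟪x, y⟫ ∧ ⟪x, y⟫ ≤ 1 := fun x hx y hy => by
    have := abs_real_inner_le_norm x y
    rw [hu x hx, hu y hy] at this
    exact abs_le.1 (by linarith)
  obtain ⟨c, hc, hpsi⟩ : ∃ c, c = Real.cos (psi X) ∧ psi X = Real.arccos c := by
    obtain ⟨x, hx, y, hy, hxy, he⟩ := aux_psi_mem X (by omega)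
    refine ⟨_, rfl, ?_⟩
    rw [he, gdist, Real.cos_arccos (hb x hx y hy).1 (hb x hx y hy).2]
  have hcon : ∀ x ∈ X, ∀ y ∈ X, (gdist x y = psi X ↔ ⟪x, y⟫ = c) := fun x hx y hy => by
    constructor
    · intro h
      rw [hc, ← h, gdist, Real.cos_arccos (hb x hx y hy).1 (hb x hx y hy).2]
    · intro h
      rw [hpsi, gdist, h]
  have hle : ∀ x ∈ X, ∀ y ∈ X, x ≠ y → ⟪x, y⟫ ≤ c := fun x hx y hy hxy => by
    have h1 := aux_psi_le X hx hy hxy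
    by_contra hlt
    push Not at hlt
    have := Real.arccos_lt_arccos (hc ▸ Real.neg_one_le_cos _) hlt (hb x hx y hy).2
    rw [hpsi, gdist] at h1
    linarith
  let S : Finset (E3 × E3) := (X ×ˢ X).filter (fun p => p.1 ≠ p.2 ∧ ⟪p.1, p.2⟫ = c)
  have hS : ∀ x y, (x, y) ∈ S ↔ (x ∈ X ∧ y ∈ X) ∧ x ≠ y ∧ ⟪x, y⟫ = c := fun x y => by
    simp [S]
  let a : E3 × E3 → PiLp 2 (fun _ : X => E3) := fun p => WithLp.toLp 2 (fun z : X =>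
    (if p.1 = z then p.2 - c • p.1 else 0) + (if p.2 = z then p.1 - c • p.2 else 0))
  rcases aux_gordan S a with ⟨w, hw0, hwS, hw1, hw⟩ | ⟨U, hU⟩
  · have hsum : ∀ {M : Type} [AddCommGroup M] [Module ℝ M] (F : E3 × E3 → M),
        ∑ p ∈ S, w p • F p = ∑ x ∈ X, ∑ y ∈ X, w (x, y) • F (x, y) := by
      intro M _ _ F
      rw [← Finset.sum_product']
      refine Finset.sum_subset (Finset.filter_subset _ _) ?_
      intro p _ hp
      rw [hwS p hp, zero_smul]
    have hw1' : ∑ x ∈ X, ∑ y ∈ X, w (x, y) = 1 := by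
      have := hsum (fun _ => (1:ℝ))
      simp only [smul_eq_mul, mul_one] at this
      rw [← this, hw1]
    refine ⟨fun x y => (w (x, y) + w (y, x)) / 2, ?_, ?_, ?_, ?_, ?_⟩
    · intro x y
      simp only [add_comm]
    · intro x y
      have := hw0 (x, y)
      have := hw0 (y, x)
      positivity
    · intro x y hxy
      have k1 : (x, y) ∉ S := fun h => by
        obtain ⟨⟨h1, h2⟩, h3, h4⟩ := (hS x y).1 h
        exact hxy ⟨h1, h2, h3, (hcon x h1 y h2).2 h4⟩
      have k2 : (y, x) ∉ S := fun h => by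
        obtain ⟨⟨h1, h2⟩, h3, h4⟩ := (hS y x).1 h
        exact hxy ⟨h2, h1, h3.symm, (hcon x h2 y h1).2 (by rw [real_inner_comm]; exact h4)⟩
      simp [hwS _ k1, hwS _ k2]
    · simp only [add_div, Finset.sum_add_distrib]
      rw [Finset.sum_comm (f := fun x y => w (y, x) / 2)]
      simp only [← Finset.sum_div]
      rw [hw1']
      norm_num
    · intro z hz
      have hz0 := congrArg (fun v : PiLp 2 (fun _ : X => E3) => v ⟨z, hz⟩) hw
      have hz1 : ∑ p ∈ S, w p • ((if p.1 = z then p.2 - c • p.1 else 0)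
          + (if p.2 = z then p.1 - c • p.2 else 0)) = 0 := by
        simpa [a] using hz0
      rw [hsum] at hz1
      simp only [smul_add, Finset.sum_add_distrib, smul_ite, smul_zero] at hz1
      rw [Finset.sum_comm (f := fun x y => if x = z then _ else _)] at hz1
      simp only [Finset.sum_ite_eq', hz, if_true] at hz1
      rw [← Finset.sum_add_distrib] at hz1
      have : ∀ y ∈ X, ((w (z, y) + w (y, z)) / 2) • tang z y =
          ((√(1 - c ^ 2))⁻¹ / 2) • (w (z, y) • (y - c • z) + w (y, z) • (y - c • z)) := by
        intro y hy
        by_cases hzy : z ≠ y ∧ ⟪z, y⟫ = c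
        · have hn : ‖y - c • z‖ = √(1 - c ^ 2) := by
            rw [← Real.sqrt_sq (norm_nonneg (y - c • z)), norm_sub_sq_real, inner_smul_right,
              norm_smul, real_inner_comm, hzy.2, hu y hy, hu z hz]
            congr 1
            simp
            ring
          rw [tang, hzy.2, hn, ← add_smul, smul_smul, smul_smul]
          congr 1
          ring
        · have k1 : (z, y) ∉ S := fun h => hzy ((hS z y).1 h).2
          have k2 : (y, z) ∉ S := fun h => hzy
            ⟨((hS y z).1 h).2.1.symm, by rw [real_inner_comm]; exact ((hS y z).1 h).2.2⟩
          simp [hwS _ k1, hwS _ k2]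
      rw [Finset.sum_congr rfl this, ← Finset.smul_sum, hz1, smul_zero]
  · exfalso
    let u : E3 → E3 := fun x => if h : x ∈ X then U ⟨x, h⟩ else 0
    have hU' : ∀ x ∈ X, ∀ y ∈ X, x ≠ y → ⟪x, y⟫ = c →
        ⟪u x, y - c • x⟫ + ⟪u y, x - c • y⟫ < 0 := by
      intro x hx y hy hxy he
      have := hU (x, y) ((hS x y).2 ⟨⟨hx, hy⟩, hxy, he⟩)
      rw [PiLp.inner_apply] at this
      have h2 : ∀ z : X, ⟪U z, a (x, y) z⟫ = (if x = z then ⟪u x, y - c • x⟫ else 0) +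
          (if y = z then ⟪u y, x - c • y⟫ else 0) := by
        rintro ⟨z, hz⟩
        simp only [a, inner_add_right]
        congr 1
        · split_ifs with h
          · subst h; simp [u, hz]
          · simp
        · split_ifs with h
          · subst h; simp [u, hz]
          · simp
      rw [Finset.sum_congr rfl (fun z _ => h2 z)] at this
      rw [Finset.sum_coe_sort X (fun z => (if x = z then ⟪u x, y - c • x⟫ else 0) +
          (if y = z then ⟪u y, x - c • y⟫ else 0)), Finset.sum_add_distrib] at this
      simpa [hx, hy] using this
    refine aux_perturb n hn X hcard hu hanti hopt c hc hpsi hle (fun x => u x - u (-x)) ?_ ?_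
    · intro x
      simp
    · intro x hx y hy hxy he
      have h1 := hU' x hx y hy hxy he
      have h2 := hU' (-x) (hanti x hx) (-y) (hanti y hy) (by simpa using hxy) (by simpa using he)
      have e : ∀ p q : E3, -p - c • (-q) = -(p - c • q) := fun p q => by
        rw [smul_neg]; abel
      rw [e, e, inner_neg_right, inner_neg_right] at h2
      simp only [inner_sub_left]
      linarith
end
end

section
/- Degree bound: let 0 < ψ < π/2 and let x be a unit vector in ℝ³. Then any set Y of unit vectors satisfying ⟨x,y⟩ = cos(ψ) for all y ∈ Y and ⟨y,y'⟩ ≤ cos(ψ) for all distinct y,y' ∈ Y has at most 5 elements. -/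
open scoped RealInnerProductSpace

noncomputable section

/-- Two points of the same 60 degree sector `120°..180°` of the unit circle. -/
lemma sector_aux (a b a' b' : ℝ) (h : a ^ 2 + b ^ 2 = 1) (h' : a' ^ 2 + b' ^ 2 = 1)
    (ha : a ≤ -1 / 2) (ha' : a' ≤ -1 / 2) (hb : 0 ≤ b) (hb' : 0 ≤ b') :
    1 / 2 ≤ a * a' + b * b' := by
  obtain ⟨t, ht0, ht⟩ : ∃ t : ℝ, 0 < t ∧ t ^ 2 = 3 :=
    ⟨Real.sqrt 3, by positivity, Real.sq_sqrt (by norm_num)⟩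
  have chord : ∀ p q : ℝ, p ^ 2 + q ^ 2 = 1 → p ≤ -1 / 2 → 0 ≤ q → t * (1 + p) ≤ q := by
    intro p q hpq hp hq
    have hp1 : -1 ≤ p := by nlinarith [sq_nonneg q]
    apply le_of_sq_le_sq _ hq
    rw [mul_pow, ht]
    nlinarith
  have c1 := chord a b h ha hb
  have c2 := chord a' b' h' ha' hb'
  have c3 : b ≤ t * (-a) := by
    apply le_of_sq_le_sq _ (by nlinarith)
    rw [mul_pow, ht]
    nlinarith
  have d1 : 3 * (1 + a) ≤ t * b := by nlinarith
  have d2 : 3 * (1 + a') ≤ t * b' := by nlinarith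
  have d3 : t * b ≤ -3 * a := by nlinarith
  -- barycentric expansion of the first point along the two ends of the sector
  have e1 : 0 ≤ (-3 * a - t * b) * (-a' - 1 / 2) := mul_nonneg (by linarith) (by linarith)
  have hp1 : -1 ≤ a' := by nlinarith [sq_nonneg b']
  have e2 : 0 ≤ (t * b) * (-a' / 2 + t * b' / 2 - 1 / 2) :=
    mul_nonneg (by positivity) (by linarith)
  have e3 : (t * b) * (t * b') = 3 * (b * b') := by
    calc (t * b) * (t * b') = t ^ 2 * (b * b') := by ring
      _ = _ := by rw [ht]
  nlinarith

lemma sector_aux' (a b a' b' : ℝ) (h : a ^ 2 + b ^ 2 = 1) (h' : a' ^ 2 + b' ^ 2 = 1)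
    (ha : -1 / 2 ≤ a) (ha' : -1 / 2 ≤ a') (ha2 : a < 1 / 2) (ha2' : a' < 1 / 2)
    (hb : 0 ≤ b) (hb' : 0 ≤ b') :
    1 / 2 ≤ a * a' + b * b' := by
  have h1 : 3 / 4 ≤ b ^ 2 := by nlinarith
  have h2 : 3 / 4 ≤ b' ^ 2 := by nlinarith
  have h3 : 3 / 4 ≤ b * b' := by
    apply le_of_sq_le_sq
    · rw [mul_pow]; nlinarith
    · positivity
  nlinarith

lemma planar {α : Type*} [DecidableEq α] (Y : Finset α) (a b : α → ℝ)
    (h1 : ∀ y ∈ Y, a y ^ 2 + b y ^ 2 = 1)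
    (h2 : ∀ y ∈ Y, ∀ y' ∈ Y, y ≠ y' → a y * a y' + b y * b y' < 1 / 2)
    (y0 : α) (h0 : y0 ∈ Y) (ha0 : a y0 = 1) (hb0 : b y0 = 0) : Y.card ≤ 5 := by
  by_contra hc
  have hc' : (Finset.univ : Finset (Bool × Bool)).card < (Y.erase y0).card := by
    rw [Finset.card_erase_of_mem h0]
    simp
    omega
  obtain ⟨y, hy, z, hz, hne, hf⟩ := Finset.exists_ne_map_eq_of_card_lt_of_maps_to
    (f := fun y => (decide (0 ≤ b y), decide (-1 / 2 ≤ a y))) hc' (fun _ _ => Finset.mem_coe.2 (Finset.mem_univ _))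
  rw [Finset.mem_erase] at hy hz
  have hay := h2 y0 h0 y hy.2 hy.1.symm
  have haz := h2 y0 h0 z hz.2 hz.1.symm
  rw [ha0, hb0] at hay haz
  have hyz := h2 y hy.2 z hz.2 hne
  have ey := h1 y hy.2
  have ez := h1 z hz.2
  simp only [Prod.mk.injEq, decide_eq_decide] at hf
  obtain ⟨f1, f2⟩ := hf
  by_cases hb : 0 ≤ b y <;> by_cases ha : -1 / 2 ≤ a y
  · linarith [sector_aux' _ _ _ _ ey ez ha (f2.1 ha) (by linarith) (by linarith) hb (f1.1 hb)]
  · have := mt f2.2 ha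
    linarith [sector_aux _ _ _ _ ey ez (by linarith) (by linarith) hb (f1.1 hb)]
  · have := mt f1.2 hb
    linarith [sector_aux' (a y) (-b y) (a z) (-b z) (by linarith) (by linarith) ha (f2.1 ha)
      (by linarith) (by linarith) (by linarith) (by linarith)]
  · have := mt f1.2 hb
    have := mt f2.2 ha
    linarith [sector_aux (a y) (-b y) (a z) (-b z) (by linarith) (by linarith)
      (by linarith) (by linarith) (by linarith) (by linarith)]

/-- Degree bound: at most 5 unit vectors can lie at geodesic distance exactly ψ
from a common unit vector while being pairwise at geodesic distance at least ψ,
when 0 < ψ < π/2. -/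
theorem degree_le_five {π : ℝ} (ψ : ℝ) (hψ0 : 0 < ψ) (hψ : ψ < π / 2)
    (x : E3) (hx : ‖x‖ = 1) (Y : Finset E3) (hY : ∀ y ∈ Y, ‖y‖ = 1)
    (hxy : ∀ y ∈ Y, ⟪x, y⟫ = Real.cos ψ)
    (hyy : ∀ y ∈ Y, ∀ y' ∈ Y, y ≠ y' → ⟪y, y'⟫ ≤ Real.cos ψ) :
    Y.card ≤ 5 := by
  classical
  generalize hc : Real.cos ψ = c at *
  have hc1 : c ≤ 1 := hc ▸ Real.cos_le_one ψ
  have hc2 : -1 ≤ c := hc ▸ Real.neg_one_le_cos ψ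
  have hxx : ⟪x, x⟫ = (1 : ℝ) := by rw [real_inner_self_eq_norm_sq, hx]; norm_num
  have hyy1 : ∀ y ∈ Y, ⟪y, y⟫ = (1 : ℝ) := fun y hy => by
    rw [real_inner_self_eq_norm_sq, hY y hy]; norm_num
  -- norm of the tangential part
  have hn : ∀ y ∈ Y, ‖y - c • x‖ ^ 2 = 1 - c ^ 2 := by
    intro y hy
    rw [← real_inner_self_eq_norm_sq]
    simp only [inner_sub_left, inner_sub_right, real_inner_smul_left, real_inner_smul_right,
      hxx, hyy1 y hy, hxy y hy, real_inner_comm x y]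
    ring
  by_cases hs : 1 - c ^ 2 = 0
  · have : Y ⊆ {c • x} := by
      intro y hy
      have h := hn y hy
      rw [hs] at h
      have h := norm_eq_zero.1 (pow_eq_zero_iff (two_ne_zero) |>.1 h)
      simpa using sub_eq_zero.1 h
    have := Finset.card_le_card this
    simp at this
    omega
  have hspos : 0 < 1 - c ^ 2 := lt_of_le_of_ne (by nlinarith) (Ne.symm hs)
  rcases Y.eq_empty_or_nonempty with rfl | ⟨y0, h0⟩
  · simp
  set s := Real.sqrt (1 - c ^ 2) with hsdef
  have hs0 : 0 < s := Real.sqrt_pos.2 hspos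
  have hss : s ^ 2 = 1 - c ^ 2 := Real.sq_sqrt hspos.le
  set u : E3 := s⁻¹ • (y0 - c • x) with hu
  have huu : ‖u‖ = 1 := by
    have : ‖y0 - c • x‖ = s := by
      rw [hsdef, ← hn y0 h0, Real.sqrt_sq (norm_nonneg _)]
    rw [hu, norm_smul, this, Real.norm_of_nonneg (by positivity)]
    field_simp
  have hxu : ⟪x, u⟫ = (0 : ℝ) := by
    rw [hu, real_inner_smul_right, inner_sub_right, real_inner_smul_right, hxx, hxy y0 h0]
    ring
  have hon : Orthonormal ℝ (({0, 1} : Set (Fin 3)).domRestrict (![x, u, 0] : Fin 3 → E3)) := by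
    constructor
    · rintro ⟨i, hi⟩
      rcases hi with rfl | rfl
      · exact hx
      · exact huu
    · rintro ⟨i, hi⟩ ⟨j, hj⟩ hij
      rcases hi with rfl | rfl <;> rcases hj with rfl | rfl
      · exact absurd rfl hij
      · exact hxu
      · exact (real_inner_comm x u).trans hxu
      · exact absurd rfl hij
  obtain ⟨B, hB⟩ := hon.exists_orthonormalBasis_extension_of_card_eq (by simp)
  have hB0 : B 0 = x := by simpa using hB 0 (by simp)
  have hB1 : B 1 = u := by simpa using hB 1 (by simp)
  have key : ∀ y ∈ Y, ∀ z ∈ Y, ⟪y, z⟫ = c ^ 2 + ⟪u, y⟫ * ⟪u, z⟫ + ⟪B 2, y⟫ * ⟪B 2, z⟫ := by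
    intro y hy z hz
    rw [← B.sum_inner_mul_inner y z, Fin.sum_univ_three, hB0, hB1, hxy z hz, real_inner_comm x y,
      hxy y hy, real_inner_comm u y, real_inner_comm (B 2) y]
    ring
  have hu0 : ⟪u, y0⟫ = s := by
    rw [hu, real_inner_smul_left, inner_sub_left, real_inner_smul_left, hyy1 y0 h0, hxy y0 h0]
    field_simp
    linarith
  apply planar Y (fun y => ⟪u, y⟫ / s) (fun y => ⟪B 2, y⟫ / s) _ _ y0 h0
  · simp only [hu0]
    field_simp
  · have h := key y0 h0 y0 h0
    rw [hyy1 y0 h0, hu0] at h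
    have : ⟪B 2, y0⟫ = (0 : ℝ) := by
      apply mul_self_eq_zero.1
      linarith
    simp [this]
  · intro y hy
    have h := key y hy y hy
    rw [hyy1 y hy] at h
    simp only [div_pow, hss]
    rw [← add_div, div_eq_one_iff_eq hs]
    linarith
  · intro y hy z hz hne
    have h := key y hy z hz
    have h2 := hyy y hy z hz hne
    have e : ⟪u, y⟫ / s * (⟪u, z⟫ / s) + ⟪B 2, y⟫ / s * (⟪B 2, z⟫ / s)
        = (⟪y, z⟫ - c ^ 2) / (1 - c ^ 2) := by
      rw [h, ← hss]
      field_simp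
      ring
    show ⟪u, y⟫ / s * (⟪u, z⟫ / s) + ⟪B 2, y⟫ / s * (⟪B 2, z⟫ / s) < 1 / 2
    rw [e, div_lt_iff₀ hspos]
    have : c ≠ 1 := by rintro rfl; simp at hs
    have : 0 < 1 - c := by
      rcases lt_or_eq_of_le hc1 with h | h
      · linarith
      · exact absurd h this
    nlinarith
end
end

section
/- Edges of a contact graph do not cross: let X be a finite set of unit vectors in ℝ³ with ψ := ψ(X) ∈ (0, π), and let x, y, z, w ∈ X be four distinct points with d(x,y) = d(z,w) = ψ. Then the geodesic arcs A₁ := { (sin((1−t)ψ)·x + sin(tψ)·y)/sin(ψ) : t ∈ [0,1] } and A₂ := { (sin((1−t)ψ)·z + sin(tψ)·w)/sin(ψ) : t ∈ [0,1] } are disjoint. -/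
open scoped RealInnerProductSpace

noncomputable section

theorem psi_le_aux (X : Finset E3) (x y : E3) (hx : x ∈ X) (hy : y ∈ X) (h : x ≠ y) :
    psi X ≤ gdist x y := by
  refine csInf_le ⟨0, ?_⟩ ⟨x, hx, y, hy, h, rfl⟩
  rintro r ⟨a, _, b, _, _, rfl⟩
  exact Real.arccos_nonneg _

theorem cos_gdist_aux (x y : E3) (hx : ‖x‖ = 1) (hy : ‖y‖ = 1) :
    Real.cos (gdist x y) = ⟪x, y⟫ := by
  have h := abs_le.1 (abs_real_inner_le_norm x y)
  rw [hx, hy] at h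
  exact Real.cos_arccos (by linarith [h.1]) (by linarith [h.2])

theorem inner_le_aux (X : Finset E3) (hu : ∀ x ∈ X, ‖x‖ = 1) (hψ0 : 0 < psi X) (x y : E3)
    (hx : x ∈ X) (hy : y ∈ X) (h : x ≠ y) : ⟪x, y⟫ ≤ Real.cos (psi X) := by
  rw [← cos_gdist_aux x y (hu x hx) (hu y hy)]
  exact Real.cos_le_cos_of_nonneg_of_le_pi hψ0.le (Real.arccos_le_pi _)
    (psi_le_aux X x y hx hy h)

theorem not_both_zero_aux (p t : ℝ) (hp : 0 < Real.sin p) :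
    0 < Real.sin ((1 - t) * p) ^ 2 + Real.sin (t * p) ^ 2 := by
  by_contra hcon
  have h1 : Real.sin ((1 - t) * p) = 0 := by
    nlinarith [sq_nonneg (Real.sin ((1 - t) * p)), sq_nonneg (Real.sin (t * p))]
  have h2 : Real.sin (t * p) = 0 := by
    nlinarith [sq_nonneg (Real.sin ((1 - t) * p)), sq_nonneg (Real.sin (t * p))]
  have h3 : Real.sin p = Real.sin ((1 - t) * p + t * p) := by congr 1; ring
  rw [Real.sin_add, h1, h2] at h3
  linarith

theorem algebra_aux (a b a' b' c N xz xw yz yw : ℝ) (ha : 0 ≤ a) (hb : 0 ≤ b) (ha' : 0 ≤ a')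
    (hb' : 0 ≤ b') (hab : 0 < a ^ 2 + b ^ 2) (hab' : 0 < a' ^ 2 + b' ^ 2) (hc : -1 < c)
    (hc1 : c < 1) (hN : N = a ^ 2 + b ^ 2 + 2 * (a * b) * c)
    (hN' : N = a' ^ 2 + b' ^ 2 + 2 * (a' * b') * c)
    (hNN : N = a * a' * xz + a * b' * xw + b * a' * yz + b * b' * yw)
    (h1 : xz ≤ c) (h2 : xw ≤ c) (h3 : yz ≤ c) (h4 : yw ≤ c) : False := by
  have hle : N ≤ c * ((a + b) * (a' + b')) := by
    have e1 := mul_le_mul_of_nonneg_left h1 (mul_nonneg ha ha')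
    have e2 := mul_le_mul_of_nonneg_left h2 (mul_nonneg ha hb')
    have e3 := mul_le_mul_of_nonneg_left h3 (mul_nonneg hb ha')
    have e4 := mul_le_mul_of_nonneg_left h4 (mul_nonneg hb hb')
    linarith
  rcases le_or_gt c 0 with h | h
  · have : 0 < N := by
      have e1 := mul_pos (by linarith : 0 < 1 + c) hab
      have e2 := mul_nonneg (by linarith : 0 ≤ -c) (sq_nonneg (a - b))
      linarith
    have e3 := mul_nonneg (by linarith : 0 ≤ -c)
      (mul_nonneg (add_nonneg ha hb) (add_nonneg ha' hb'))
    linarith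
  · have e1 := mul_pos (by linarith : 0 < 1 - c) hab
    have e2 := mul_pos (by linarith : 0 < 1 - c) hab'
    have e3 := mul_nonneg h.le (sq_nonneg ((a + b) - (a' + b')))
    linarith

/-- Edges of a contact graph do not cross: minimizing geodesic arcs between two
disjoint contact pairs are disjoint. -/
theorem contact_edges_disjoint {π : ℝ} (X : Finset E3) (hu : ∀ x ∈ X, ‖x‖ = 1)
    (hψ0 : 0 < psi X) (hψπ : psi X < π)
    (x y z w : E3) (hx : x ∈ X) (hy : y ∈ X) (hz : z ∈ X) (hw : w ∈ X)
    (hxy : x ≠ y) (hxz : x ≠ z) (hxw : x ≠ w)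
    (hyz : y ≠ z) (hyw : y ≠ w) (hzw : z ≠ w)
    (hdxy : gdist x y = psi X) (hdzw : gdist z w = psi X) :
    Disjoint
      ((fun t : ℝ => (Real.sin (psi X))⁻¹ •
        (Real.sin ((1 - t) * psi X) • x + Real.sin (t * psi X) • y)) '' Set.Icc 0 1)
      ((fun t : ℝ => (Real.sin (psi X))⁻¹ •
        (Real.sin ((1 - t) * psi X) • z + Real.sin (t * psi X) • w)) '' Set.Icc 0 1) := by
  have hs0 : 0 ≤ Real.arccos ⟪x, y⟫ := Real.arccos_nonneg _
  have hpi : psi X ≤ Real.pi := by rw [← hdxy]; exact Real.arccos_le_pi _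
  have ixy : ⟪x, y⟫ = Real.cos (psi X) := by
    rw [← hdxy, cos_gdist_aux x y (hu x hx) (hu y hy)]
  have izw : ⟪z, w⟫ = Real.cos (psi X) := by
    rw [← hdzw, cos_gdist_aux z w (hu z hz) (hu w hw)]
  have ixz := inner_le_aux X hu hψ0 x z hx hz hxz
  have ixw := inner_le_aux X hu hψ0 x w hx hw hxw
  have iyz := inner_le_aux X hu hψ0 y z hy hz hyz
  have iyw := inner_le_aux X hu hψ0 y w hy hw hyw
  have nx : ⟪x, x⟫ = 1 := by rw [real_inner_self_eq_norm_sq, hu x hx]; norm_num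
  have ny : ⟪y, y⟫ = 1 := by rw [real_inner_self_eq_norm_sq, hu y hy]; norm_num
  have nz : ⟪z, z⟫ = 1 := by rw [real_inner_self_eq_norm_sq, hu z hz]; norm_num
  have nw : ⟪w, w⟫ = 1 := by rw [real_inner_self_eq_norm_sq, hu w hw]; norm_num
  have key : ∀ u v : E3, ⟪u, u⟫ = 1 → ⟪v, v⟫ = 1 → ⟪u, v⟫ ≤ -1 → u = -v := by
    intro u v h1 h2 h3
    have h4 : ⟪u + v, u + v⟫ ≤ 0 := by
      rw [real_inner_add_add_self, h1, h2]; linarith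
    exact eq_neg_of_add_eq_zero_left (inner_self_eq_zero (𝕜 := ℝ) |>.1 (le_antisymm h4 real_inner_self_nonneg))
  have hlt : psi X < Real.pi := by
    refine lt_of_le_of_ne hpi fun h => ?_
    rw [h, Real.cos_pi] at ixy ixz
    have e1 := key y x ny nx (by rw [real_inner_comm]; exact ixy.le)
    have e2 := key z x nz nx (by rw [real_inner_comm]; exact ixz)
    exact hyz (e1.trans e2.symm)
  have hsin : 0 < Real.sin (psi X) := Real.sin_pos_of_pos_of_lt_pi hψ0 hlt
  have hc1 : Real.cos (psi X) < 1 := by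
    nlinarith [Real.sin_sq_add_cos_sq (psi X), Real.cos_le_one (psi X)]
  have hc : -1 < Real.cos (psi X) := by
    nlinarith [Real.sin_sq_add_cos_sq (psi X), Real.neg_one_le_cos (psi X)]
  have hnn : ∀ t : ℝ, 0 ≤ t → t ≤ 1 → 0 ≤ Real.sin (t * psi X) := fun t h0 h1 =>
    Real.sin_nonneg_of_nonneg_of_le_pi (by positivity) (by nlinarith)
  rw [Set.disjoint_left]
  rintro p ⟨t, ⟨ht0, ht1⟩, rfl⟩ ⟨s, ⟨hs0, hs1⟩, heq⟩
  have heq := smul_right_injective E3 (inv_ne_zero hsin.ne') heq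
  have ha := hnn (1 - t) (by linarith) (by linarith)
  have hb := hnn t ht0 ht1
  have ha' := hnn (1 - s) (by linarith) (by linarith)
  have hb' := hnn s hs0 hs1
  have hab := not_both_zero_aux (psi X) t hsin
  have hab' := not_both_zero_aux (psi X) s hsin
  generalize Real.sin ((1 - t) * psi X) = a at *
  generalize Real.sin (t * psi X) = b at *
  generalize Real.sin ((1 - s) * psi X) = a' at *
  generalize Real.sin (s * psi X) = b' at *
  have hq : ∀ (u v : E3) (k l : ℝ), ⟪u, u⟫ = 1 → ⟪v, v⟫ = 1 → ⟪u, v⟫ = Real.cos (psi X) →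
      ⟪k • u + l • v, k • u + l • v⟫ = k ^ 2 + l ^ 2 + 2 * (k * l) * Real.cos (psi X) := by
    intro u v k l h1 h2 h3
    simp only [inner_add_left, inner_add_right, real_inner_smul_left, real_inner_smul_right,
      real_inner_comm u v, h1, h2, h3]
    have h4 : ⟪v, u⟫ = Real.cos (psi X) := by rw [real_inner_comm]; exact h3
    try simp only [h4]
    ring
  refine algebra_aux a b a' b' (Real.cos (psi X)) ⟪a • x + b • y, a • x + b • y⟫
    ⟪x, z⟫ ⟪x, w⟫ ⟪y, z⟫ ⟪y, w⟫ ha hb ha' hb' hab hab' hc hc1 (hq x y a b nx ny ixy) ?_ ?_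
    ixz ixw iyz iyw
  · rw [← heq]; exact hq z w a' b' nz nw izw
  · conv_lhs => rw [← heq]
    rw [heq]
    nth_rewrite 2 [← heq]
    simp only [inner_add_left, inner_add_right, real_inner_smul_left, real_inner_smul_right]
    ring
end
end

section
/- Angle lower bound: let 0 < ψ < π/2 and let x, y, z be unit vectors in ℝ³ with d(x,y) = d(x,z) = ψ and d(y,z) ≥ ψ. Then ∠(y,x,z) ≥ arccos( cos(ψ) / (1 + cos(ψ)) ). -/
open scoped RealInnerProductSpace

noncomputable section

/-- Angle lower bound: if y and z are both at geodesic distance ψ from x and at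
geodesic distance at least ψ from each other, then the angle at x is at least
the interior angle of the equilateral spherical triangle of side ψ. -/
theorem angle_lower_bound {π : ℝ} (ψ : ℝ) (hψ0 : 0 < ψ) (hψ : ψ < π / 2)
    (x y z : E3) (hx : ‖x‖ = 1) (hy : ‖y‖ = 1) (hz : ‖z‖ = 1)
    (hxy : gdist x y = ψ) (hxz : gdist x z = ψ) (hyz : ψ ≤ gdist y z) :
    Real.arccos (Real.cos ψ / (1 + Real.cos ψ)) ≤ ang y x z := by
  -- `π` is an arbitrary real here, so `hψ` carries no information; it is not needed.
  have bd : ∀ u v : E3, ‖u‖ = 1 → ‖v‖ = 1 → -1 ≤ ⟪u, v⟫ ∧ ⟪u, v⟫ ≤ 1 := by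
    intro u v hu hv
    have h := abs_real_inner_le_norm u v
    rw [hu, hv, one_mul] at h
    exact abs_le.mp h
  obtain ⟨a1, a2⟩ := bd x y hx hy
  obtain ⟨b1, b2⟩ := bd x z hx hz
  obtain ⟨d1, d2⟩ := bd y z hy hz
  unfold gdist at hxy hxz hyz
  have hcy : ⟪x, y⟫ = Real.cos ψ := by rw [← hxy, Real.cos_arccos a1 a2]
  have hcz : ⟪x, z⟫ = Real.cos ψ := by rw [← hxz, Real.cos_arccos b1 b2]
  have hd : ⟪y, z⟫ ≤ Real.cos ψ := by
    rw [← Real.cos_arccos d1 d2]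
    exact Real.cos_le_cos_of_nonneg_of_le_pi hψ0.le (Real.arccos_le_pi _) hyz
  have hxx : ⟪x, x⟫ = 1 := by rw [real_inner_self_eq_norm_sq, hx]; norm_num
  have hyy : ⟪y, y⟫ = 1 := by rw [real_inner_self_eq_norm_sq, hy]; norm_num
  have hzz : ⟪z, z⟫ = 1 := by rw [real_inner_self_eq_norm_sq, hz]; norm_num
  have hpi : ψ ≤ Real.pi := hxy ▸ Real.arccos_le_pi _
  have hc1 : Real.cos ψ < 1 := by
    have := Real.cos_lt_cos_of_nonneg_of_le_pi le_rfl hpi hψ0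
    rwa [Real.cos_zero] at this
  have hc2 : -1 < Real.cos ψ := by
    rcases lt_or_eq_of_le (hcy ▸ a1) with h | h
    · exact h
    · exfalso
      -- if `cos ψ = -1` then `y = z = -x`, so `⟪y, z⟫ = 1`
      have e1 : ⟪x + y, x + y⟫ = 0 := by
        rw [inner_add_left, inner_add_right, inner_add_right, real_inner_comm x y, hxx, hyy, hcy,
          ← h]
        norm_num
      have e2 : x + y = 0 := inner_self_eq_zero.mp e1
      have e3 : ⟪x + y, z⟫ = 0 := by rw [e2, inner_zero_left]
      rw [inner_add_left, hcz] at e3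
      linarith
  set c := Real.cos ψ with hc
  have key : ∀ u v : E3, ⟪x, u⟫ = c → ⟪x, v⟫ = c →
      ⟪u - c • x, v - c • x⟫ = ⟪u, v⟫ - c ^ 2 := by
    intro u v hu hv
    rw [inner_sub_left, inner_sub_right, inner_sub_right, real_inner_smul_left,
      real_inner_smul_right, real_inner_smul_left, real_inner_smul_right,
      real_inner_comm x u, hu, hv, hxx]
    ring
  have ny : ‖y - c • x‖ ^ 2 = 1 - c ^ 2 := by
    rw [← real_inner_self_eq_norm_sq, key y y hcy hcy, hyy]
  have nz : ‖z - c • x‖ ^ 2 = 1 - c ^ 2 := by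
    rw [← real_inner_self_eq_norm_sq, key z z hcz hcz, hzz]
  have hn : ‖z - c • x‖ = ‖y - c • x‖ :=
    (sq_eq_sq₀ (norm_nonneg _) (norm_nonneg _)).mp (nz.trans ny.symm)
  unfold ang tang
  apply Real.arccos_le_arccos
  rw [hcy, hcz, real_inner_smul_left, real_inner_smul_right, key y z hcy hcz, hn, ← mul_assoc,
    ← mul_inv, ← sq, ny, inv_mul_eq_div, div_le_div_iff₀ (by nlinarith) (by linarith)]
  nlinarith [mul_nonneg (sub_nonneg.2 hd) (by linarith : (0 : ℝ) ≤ 1 + c)]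
end
end
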